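/- Let m, n ≥ 1, let b : Fin m → ZMod 2 and k : Fin m → ℕ with k i ≤ n for all i, and write b^c i = 1 + b i (entrywise complement in ZMod 2). Then, for the n×m concatenated bit- and phase-flip repetition code, for all real x, y: the weight enumerator of the stabilizer coset (M(b,k) + X̄) + S equals F^e_m(u, w), and the weight enumerator of (M(b,k) + Ȳ) + S equals F^o_m(u, w), where u i = h^{b^c i}_{k i, n}(x,y) and w i = h^{b^c i}_{n − k i, n}(x,y). -/

import Mathlib

/-!
The stabilizer group `S` is a product: its elements consist of a vector `ζ` of even parity on the
blocks and, independently, an even X-part in each block. As the weight is additive over qubits, the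
enumerator of any coset `c + S` is a sum over even `ζ` of a product over the blocks of sums over
even X-parts. Both layers are evaluated by the same character sum
`∑_{a even} ∏ q i (a i) = (∏ (q i 0 + q i 1) + ∏ (q i 0 - q i 1)) / 2`. Within a block the second
product vanishes as soon as some qubit carries a `Z`, so a block contributes `h^β_{k,n}` where `β`
is its X-parity and `k` its number of `Z`s. Shifting the block by `ζ i = 1` replaces `k` by `n - k`,
so the outer layer gives `F^e(u, w)`. Adding `Z̄` to `c` exchanges `u` and `w` in block `0` only,
which flips the sign of `∏ (u i - w i)` and thus turns `F^e` into `F^o`.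
-/

/-- The weight of a Pauli string on qubits indexed by `Fin m × Fin n`. -/
def wt2 {m n : ℕ} (v : Fin m × Fin n → ZMod 2 × ZMod 2) : ℕ :=
  (Finset.univ.filter fun p => v p ≠ (0, 0)).card

/-- The weight enumerator of a finite set of Pauli strings on `Fin m × Fin n`. -/
noncomputable def enum2 {m n : ℕ} (T : Finset (Fin m × Fin n → ZMod 2 × ZMod 2))
    (x y : ℝ) : ℝ :=
  ∑ v ∈ T, x ^ (m * n - wt2 v) * y ^ wt2 v

/-- The stabilizer group of the `n × m` concatenated bit- and phase-flip repetition code: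
even X-weight in each block, Z-part constant within each block, and the block Z-values
sum to zero. -/
def concatStab (m n : ℕ) : Finset (Fin m × Fin n → ZMod 2 × ZMod 2) :=
  Finset.univ.filter fun v =>
    (∀ i, ∑ j, (v (i, j)).1 = 0) ∧
    ∃ ζ : Fin m → ZMod 2, (∀ i j, (v (i, j)).2 = ζ i) ∧ ∑ i, ζ i = 0

/-- `M(b,k)`: block `i` has X-part `b i` at position 0 (and 0 elsewhere) and Z-part 1 at
positions `j < k i` (and 0 elsewhere). -/
def Mbk (m n : ℕ) (b : Fin m → ZMod 2) (k : Fin m → ℕ) :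
    Fin m × Fin n → ZMod 2 × ZMod 2 :=
  fun p => (if (p.2 : ℕ) = 0 then b p.1 else 0, if (p.2 : ℕ) < k p.1 then 1 else 0)

/-- The logical-Z representative: Z-part 1 at every position of block 0. -/
def ZbarC (m n : ℕ) : Fin m × Fin n → ZMod 2 × ZMod 2 :=
  fun p => (0, if (p.1 : ℕ) = 0 then 1 else 0)

/-- The logical-X representative: X-part 1 at position 0 of every block. -/
def XbarC (m n : ℕ) : Fin m × Fin n → ZMod 2 × ZMod 2 :=
  fun p => (if (p.2 : ℕ) = 0 then 1 else 0, 0)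

/-- The logical-Y representative. -/
def YbarC (m n : ℕ) : Fin m × Fin n → ZMod 2 × ZMod 2 :=
  XbarC m n + ZbarC m n

noncomputable def fe (n : ℕ) (x y : ℝ) : ℝ := ((x + y) ^ n + (x - y) ^ n) / 2

noncomputable def fo (n : ℕ) (x y : ℝ) : ℝ := ((x + y) ^ n - (x - y) ^ n) / 2

noncomputable def g (k n : ℕ) (x y : ℝ) : ℝ := (1 / 2) * (x + y) ^ (n - k) * (2 * y) ^ k

/-- `h^b_{k,n}`. -/
noncomputable def hpol (b : ZMod 2) (k n : ℕ) (x y : ℝ) : ℝ :=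
  if k = 0 then (if b = 0 then fe n x y else fo n x y) else g k n x y

noncomputable def Fe (m : ℕ) (u w : Fin m → ℝ) : ℝ :=
  ((∏ i, (u i + w i)) + ∏ i, (u i - w i)) / 2

noncomputable def Fo (m : ℕ) (u w : Fin m → ℝ) : ℝ :=
  ((∏ i, (u i + w i)) - ∏ i, (u i - w i)) / 2

open Finset

lemma addChar_map_sum_eq_prod {A M ι : Type*} [AddCommMonoid A] [CommMonoid M] (ψ : AddChar A M)
    (s : Finset ι) (f : ι → A) : ψ (∑ i ∈ s, f i) = ∏ i ∈ s, ψ (f i) :=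
  map_sum ψ.toAddMonoidHom f s

lemma zmod_two_eq_zero_or_one (a : ZMod 2) : a = 0 ∨ a = 1 := by
  decide +revert

lemma prod_add_eq_sum_zmod_two {R ι : Type*} [CommSemiring R] [Fintype ι] [DecidableEq ι]
    (q : ι → ZMod 2 → R) :
    ∏ i, (q i 0 + q i 1) = ∑ a : ι → ZMod 2, ∏ i, q i (a i) := by
  rw [← Fintype.prod_sum]
  exact prod_congr rfl fun i _ => (Fin.sum_univ_two (q i)).symm

section ParitySum

variable (R : Type*) [CommRing R]

/-- The character `a ↦ (-1) ^ a` of `ZMod 2`, with values in a commutative ring. It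
detects even parity through `one_add_signChar`. -/
def signChar : AddChar (ZMod 2) R :=
  AddChar.zmodChar 2 (neg_one_sq : (-1 : R) ^ 2 = 1)

@[simp]
lemma signChar_one : signChar R 1 = -1 := by
  simp [signChar, AddChar.zmodChar_apply, ZMod.val_one]

lemma one_add_signChar (a : ZMod 2) : 1 + signChar R a = if a = 0 then 2 else 0 := by
  obtain rfl | rfl := zmod_two_eq_zero_or_one a
  · simp [one_add_one_eq_two]
  · simp

/-- The binary vectors of even parity: the X-parts allowed in a block of a stabilizer element,
and the Z-values allowed on its blocks. -/
def evenVectors (ι : Type*) [Fintype ι] [DecidableEq ι] : Finset (ι → ZMod 2) :=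
  {a | ∑ i, a i = 0}

variable {R} {ι : Type*} [Fintype ι] [DecidableEq ι]

@[simp]
lemma mem_evenVectors {a : ι → ZMod 2} : a ∈ evenVectors ι ↔ ∑ i, a i = 0 := by
  simp [evenVectors]

lemma prod_sub_eq_sum_signChar (q : ι → ZMod 2 → R) :
    ∏ i, (q i 0 - q i 1) = ∑ a : ι → ZMod 2, signChar R (∑ i, a i) * ∏ i, q i (a i) := by
  simpa [sub_eq_add_neg, addChar_map_sum_eq_prod, prod_mul_distrib]
    using prod_add_eq_sum_zmod_two fun i a => signChar R a * q i a

lemma two_mul_sum_evenVectors_prod (q : ι → ZMod 2 → R) :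
    2 * ∑ a ∈ evenVectors ι, ∏ i, q i (a i) =
      ∏ i, (q i 0 + q i 1) + ∏ i, (q i 0 - q i 1) := by
  rw [prod_add_eq_sum_zmod_two, prod_sub_eq_sum_signChar, ← sum_add_distrib, evenVectors,
    sum_filter, mul_sum]
  refine sum_congr rfl fun a _ => ?_
  rw [← one_add_mul, one_add_signChar]
  split_ifs <;> simp

end ParitySum

section HammingNorm

variable {ι : Type*} [Fintype ι]

lemma card_filter_eq_zero_eq_card_sub_hammingNorm {β : Type*} [Zero β] [DecidableEq β]
    (v : ι → β) : #{i | v i = 0} = Fintype.card ι - hammingNorm v :=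
  Nat.eq_sub_of_add_eq (card_filter_add_card_filter_not fun i => v i = 0)

lemma prod_ite_eq_zero_eq_pow_hammingNorm {M β : Type*} [CommMonoid M] [Zero β] [DecidableEq β]
    (v : ι → β) (x y : M) :
    ∏ i, (if v i = 0 then x else y) =
      x ^ (Fintype.card ι - hammingNorm v) * y ^ hammingNorm v := by
  rw [prod_ite, prod_const, prod_const, card_filter_eq_zero_eq_card_sub_hammingNorm]
  rfl

lemma hammingNorm_add_one_zmod_two (z : ι → ZMod 2) :
    hammingNorm (fun i => z i + 1) = Fintype.card ι - hammingNorm z := by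
  have hflip : ∀ a : ZMod 2, a + 1 ≠ 0 ↔ a = 0 := by decide
  rw [← card_filter_eq_zero_eq_card_sub_hammingNorm]
  simp only [hammingNorm, hflip]

lemma hammingNorm_indicator_lt {n k : ℕ} (hk : k ≤ n) :
    hammingNorm (fun j : Fin n => if (j : ℕ) < k then (1 : ZMod 2) else 0) = k := by
  simp [hammingNorm, Fin.card_filter_val_lt, hk]

end HammingNorm

section Block

lemma hpol_eq (β : ZMod 2) (k n : ℕ) (x y : ℝ) :
    hpol β k n x y =
      ((x + y) ^ (n - k) * (2 * y) ^ k + signChar ℝ β * ((x - y) ^ (n - k) * 0 ^ k)) / 2 := by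
  rcases eq_or_ne k 0 with rfl | hk
  · obtain rfl | rfl := zmod_two_eq_zero_or_one β <;> simp [hpol, fe, fo, sub_eq_add_neg]
  · simp only [hpol, g, if_neg hk, zero_pow hk]
    ring

lemma qubit_add_qubit_flip (p : ZMod 2 × ZMod 2) (z : ZMod 2) (x y : ℝ) :
    (if p + (0, z) = 0 then x else y) + (if p + (1, z) = 0 then x else y) =
      if p.2 + z = 0 then x + y else 2 * y := by
  obtain ⟨a, z'⟩ := p
  obtain rfl | rfl := zmod_two_eq_zero_or_one a <;>
    by_cases hz : z' + z = 0 <;>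
    simp [hz, two_mul, add_comm y x, CharTwo.add_self_eq_zero]

lemma qubit_sub_qubit_flip (p : ZMod 2 × ZMod 2) (z : ZMod 2) (x y : ℝ) :
    (if p + (0, z) = 0 then x else y) - (if p + (1, z) = 0 then x else y) =
      signChar ℝ p.1 * if p.2 + z = 0 then x - y else 0 := by
  obtain ⟨a, z'⟩ := p
  obtain rfl | rfl := zmod_two_eq_zero_or_one a <;>
    by_cases hz : z' + z = 0 <;>
    simp [hz, CharTwo.add_self_eq_zero]

lemma sum_evenVectors_block_eq_hpol {n : ℕ} (p : Fin n → ZMod 2 × ZMod 2) (z : ZMod 2)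
    (x y : ℝ) :
    ∑ a ∈ evenVectors (Fin n), ∏ j, (if p j + (a j, z) = 0 then x else y) =
      hpol (∑ j, (p j).1) (hammingNorm fun j => (p j).2 + z) n x y := by
  rw [hpol_eq, eq_div_iff two_ne_zero, mul_comm,
    two_mul_sum_evenVectors_prod fun j a => if p j + (a, z) = 0 then x else y]
  simp only [qubit_add_qubit_flip, qubit_sub_qubit_flip, prod_mul_distrib,
    ← addChar_map_sum_eq_prod, prod_ite_eq_zero_eq_pow_hammingNorm, Fintype.card_fin]

end Block

section Coset

variable {m n : ℕ}

/-- The parity of the X-part of block `i`. -/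
def blockXParity (c : Fin m × Fin n → ZMod 2 × ZMod 2) (i : Fin m) : ZMod 2 :=
  ∑ j, (c (i, j)).1

/-- The number of qubits of block `i` whose Z-part is nontrivial. -/
def blockZWeight (c : Fin m × Fin n → ZMod 2 × ZMod 2) (i : Fin m) : ℕ :=
  hammingNorm fun j => (c (i, j)).2

lemma blockZWeight_le (c : Fin m × Fin n → ZMod 2 × ZMod 2) (i : Fin m) :
    blockZWeight c i ≤ n :=
  hammingNorm_le_card_fintype.trans_eq (Fintype.card_fin n)

lemma hammingNorm_block_add_one (c : Fin m × Fin n → ZMod 2 × ZMod 2) (i : Fin m) :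
    hammingNorm (fun j => (c (i, j)).2 + 1) = n - blockZWeight c i := by
  rw [hammingNorm_add_one_zmod_two, Fintype.card_fin, blockZWeight]

/-- The Pauli string with block Z-values `s.1` and X-parts `s.2`. Restricted to even vectors, it
parametrizes the stabilizer group. -/
def ofBlockData (s : (Fin m → ZMod 2) × (Fin m → Fin n → ZMod 2)) :
    Fin m × Fin n → ZMod 2 × ZMod 2 :=
  fun p => (s.2 p.1 p.2, s.1 p.1)

-- In an empty block the Z-value would be invisible.
lemma ofBlockData_injective [NeZero n] : Function.Injective (ofBlockData (m := m) (n := n)) := by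
  rintro ⟨ζ, a⟩ ⟨ζ', a'⟩ h
  have hval : ∀ i j, a i j = a' i j ∧ ζ i = ζ' i := fun i j =>
    Prod.ext_iff.mp (congrFun h (i, j))
  exact Prod.ext (funext fun i => (hval i 0).2) (funext₂ fun i j => (hval i j).1)

lemma concatStab_eq_image_ofBlockData :
    concatStab m n =
      (evenVectors (Fin m) ×ˢ Fintype.piFinset fun _ => evenVectors (Fin n)).image
        ofBlockData := by
  ext v
  simp only [concatStab, mem_filter_univ, mem_image, mem_product, Fintype.mem_piFinset,
    mem_evenVectors, Prod.exists]
  constructor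
  · rintro ⟨hX, ζ, hZ, hζ⟩
    exact ⟨ζ, fun i j => (v (i, j)).1, ⟨hζ, hX⟩, funext fun p => Prod.ext rfl (hZ p.1 p.2).symm⟩
  · rintro ⟨ζ, a, ⟨hζ, hX⟩, rfl⟩
    exact ⟨hX, ζ, fun _ _ => rfl, hζ⟩

lemma monomial_wt2_eq_prod (v : Fin m × Fin n → ZMod 2 × ZMod 2) (x y : ℝ) :
    x ^ (m * n - wt2 v) * y ^ wt2 v = ∏ i, ∏ j, if v (i, j) = 0 then x else y := by
  rw [← Fintype.prod_prod_type fun p => if v p = 0 then x else y,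
    prod_ite_eq_zero_eq_pow_hammingNorm, Fintype.card_prod, Fintype.card_fin, Fintype.card_fin]
  rfl

lemma enum2_coset_eq_sum_prod_blocks [NeZero n] (c : Fin m × Fin n → ZMod 2 × ZMod 2)
    (x y : ℝ) :
    enum2 ((concatStab m n).image fun s => c + s) x y =
      ∑ ζ ∈ evenVectors (Fin m), ∏ i, ∑ a ∈ evenVectors (Fin n),
        ∏ j, if c (i, j) + (a j, ζ i) = 0 then x else y := by
  simp only [enum2, monomial_wt2_eq_prod, concatStab_eq_image_ofBlockData,
    sum_image (add_right_injective c).injOn, sum_image ofBlockData_injective.injOn, sum_product,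
    prod_univ_sum]
  rfl

lemma sum_evenVectors_prod_eq_Fe (q : Fin m → ZMod 2 → ℝ) :
    ∑ ζ ∈ evenVectors (Fin m), ∏ i, q i (ζ i) = Fe m (fun i => q i 0) (fun i => q i 1) := by
  rw [Fe, ← two_mul_sum_evenVectors_prod, mul_div_cancel_left₀ _ two_ne_zero]

theorem enum2_coset_eq_Fe [NeZero n] (c : Fin m × Fin n → ZMod 2 × ZMod 2) (x y : ℝ) :
    enum2 ((concatStab m n).image fun s => c + s) x y =
      Fe m (fun i => hpol (blockXParity c i) (blockZWeight c i) n x y)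
        (fun i => hpol (blockXParity c i) (n - blockZWeight c i) n x y) := by
  calc enum2 ((concatStab m n).image fun s => c + s) x y
      = ∑ ζ ∈ evenVectors (Fin m), ∏ i,
          hpol (blockXParity c i) (hammingNorm fun j => (c (i, j)).2 + ζ i) n x y := by
        rw [enum2_coset_eq_sum_prod_blocks]
        exact sum_congr rfl fun ζ _ => prod_congr rfl fun i _ =>
          sum_evenVectors_block_eq_hpol (fun j => c (i, j)) (ζ i) x y
    _ = Fe m (fun i => hpol (blockXParity c i) (blockZWeight c i) n x y)
          (fun i => hpol (blockXParity c i) (n - blockZWeight c i) n x y) := by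
        rw [sum_evenVectors_prod_eq_Fe fun i z =>
          hpol (blockXParity c i) (hammingNorm fun j => (c (i, j)).2 + z) n x y]
        simp only [add_zero, hammingNorm_block_add_one, blockZWeight]

lemma Fe_swap_eq_Fo (u w : Fin m → ℝ) (i₀ : Fin m) :
    Fe m (fun i => if i = i₀ then w i else u i) (fun i => if i = i₀ then u i else w i) =
      Fo m u w := by
  have hadd (i : Fin m) :
      (if i = i₀ then w i else u i) + (if i = i₀ then u i else w i) = u i + w i := by
    split_ifs <;> ring
  have hsub (i : Fin m) :
      (if i = i₀ then w i else u i) - (if i = i₀ then u i else w i) =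
        (if i = i₀ then -1 else 1) * (u i - w i) := by
    split_ifs <;> ring
  have hsign : ∏ i, (if i = i₀ then -1 else 1 : ℝ) = -1 := by simp
  simp only [Fe, Fo, hadd, hsub, prod_mul_distrib, hsign, neg_one_mul, ← sub_eq_add_neg]

lemma blockXParity_add_ZbarC (c : Fin m × Fin n → ZMod 2 × ZMod 2) (i : Fin m) :
    blockXParity (c + ZbarC m n) i = blockXParity c i := by
  simp [blockXParity, ZbarC]

lemma blockZWeight_add_ZbarC [NeZero m] (c : Fin m × Fin n → ZMod 2 × ZMod 2) (i : Fin m) :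
    blockZWeight (c + ZbarC m n) i = if i = 0 then n - blockZWeight c i else blockZWeight c i := by
  split_ifs with hi
  · rw [← hammingNorm_block_add_one]
    simp [blockZWeight, ZbarC, hi]
  · simp [blockZWeight, ZbarC, hi]

theorem enum2_coset_add_ZbarC_eq_Fo [NeZero m] [NeZero n]
    (c : Fin m × Fin n → ZMod 2 × ZMod 2) (x y : ℝ) :
    enum2 ((concatStab m n).image fun s => (c + ZbarC m n) + s) x y =
      Fo m (fun i => hpol (blockXParity c i) (blockZWeight c i) n x y)
        (fun i => hpol (blockXParity c i) (n - blockZWeight c i) n x y) := by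
  rw [enum2_coset_eq_Fe, ← Fe_swap_eq_Fo _ _ 0]
  congr 1 <;> funext i <;> rw [blockXParity_add_ZbarC, blockZWeight_add_ZbarC] <;> split_ifs
  all_goals simp only [Nat.sub_sub_self (blockZWeight_le c i)]

end Coset

section Representative

variable {m n : ℕ}

lemma blockXParity_Mbk_add_XbarC [NeZero n] (b : Fin m → ZMod 2) (k : Fin m → ℕ) (i : Fin m) :
    blockXParity (Mbk m n b k + XbarC m n) i = 1 + b i := by
  simp [blockXParity, Mbk, XbarC, sum_add_distrib, add_comm]

lemma blockZWeight_Mbk_add_XbarC (b : Fin m → ZMod 2) {k : Fin m → ℕ} {i : Fin m}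
    (hk : k i ≤ n) : blockZWeight (Mbk m n b k + XbarC m n) i = k i := by
  simpa [blockZWeight, Mbk, XbarC] using hammingNorm_indicator_lt hk

end Representative

theorem weight_enumerator_concat_coset_Xbar_Ybar (m n : ℕ) (hm : 1 ≤ m) (hn : 1 ≤ n)
    (b : Fin m → ZMod 2) (k : Fin m → ℕ) (hk : ∀ i, k i ≤ n) (x y : ℝ) :
    enum2 ((concatStab m n).image fun s => (Mbk m n b k + XbarC m n) + s) x y
        = Fe m (fun i => hpol (1 + b i) (k i) n x y)
            (fun i => hpol (1 + b i) (n - k i) n x y) ∧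
      enum2 ((concatStab m n).image fun s => (Mbk m n b k + YbarC m n) + s) x y
        = Fo m (fun i => hpol (1 + b i) (k i) n x y)
            (fun i => hpol (1 + b i) (n - k i) n x y) := by
  have : NeZero m := ⟨Nat.one_le_iff_ne_zero.mp hm⟩
  have : NeZero n := ⟨Nat.one_le_iff_ne_zero.mp hn⟩
  have hZ (i : Fin m) : blockZWeight (Mbk m n b k + XbarC m n) i = k i :=
    blockZWeight_Mbk_add_XbarC b (hk i)
  constructor
  · simp only [enum2_coset_eq_Fe, blockXParity_Mbk_add_XbarC, hZ]
  · simp only [YbarC, ← add_assoc, enum2_coset_add_ZbarC_eq_Fo, blockXParity_Mbk_add_XbarC, hZ]
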